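/- Let 1 ≤ p < ∞ and w ∈ 𝒲. Let (E_n)_{n=1}^∞ be any sequence of finite-dimensional real normed spaces and let E = (⊕_{n=1}^∞ E_n)_{ℓ_p}. Then there do not exist a constant C ≥ 1 and a sequence (z_i)_{i=1}^∞ in E such that for every finitely supported real sequence (a_i): C^{-1}·‖a‖_{g(w,p)} ≤ ‖∑_{i=1}^∞ a_i z_i‖_E ≤ C·‖a‖_{g(w,p)}. In particular, the Garling sequence space g(w,p) does not embed isomorphically into any ℓ_p-sum of finite-dimensional spaces. -/

import Mathlib

/-!
The idea: in an `ℓ_p`-sum of finite-dimensional spaces, differences of far-out terms of a bounded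
separated sequence span (a subsequence of) `ℓ_p`, whereas sums of `N` unit vectors in `g(w,p)` have
norm at most `(w_1 + ⋯ + w_N)^{1/p} = o(N^{1/p})`.

Suppose `(z_i)` is equivalent to the unit vector basis of `g(w,p)`. Then `(z_i)` is bounded, and
`δ`-separated with `δ = C⁻¹`, since `‖e_j - e_i‖ ≥ 1`. Given `S ∈ E`, take a finite set `F` of
coordinates carrying `S` up to a small error. By compactness of bounded sets in `∏_{n ∈ F} E_n`
there are arbitrarily large `i < j` such that `z_j - z_i` is almost supported off `F`; hence
`‖S + (z_j - z_i)‖ ^ p` is almost `‖S‖ ^ p + ‖z_j - z_i‖ ^ p`, and so at least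
`‖S‖ ^ p + δ ^ p / 2` (`exists_add_sub_norm_rpow_ge`). Iterating yields, for every `N`, coefficients
`a` with `|a_i| ≤ 1` and at most `2 N` nonzero entries such that
`‖∑ a_i z_i‖ ^ p ≥ N δ ^ p / 2` (`exists_coeffs_norm_rpow_ge`). On the other hand
`‖a‖_{g(w,p)} ^ p ≤ w_1 + ⋯ + w_{2N}` (`garlingNorm_le`), and the averages of the null sequence
`w` tend to `0`: a contradiction for large `N`.
-/

/-- The Garling norm `‖a‖_{g(w,p)} = sup (∑_k |a_{n_k}|^p w_k)^{1/p}` of a real sequence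
`a`, the supremum taken over all strictly increasing sequences `n_1 < n_2 < ⋯` of indices
(strictly monotone maps `f : ℕ → ℕ`; everything `0`-indexed). -/
noncomputable def garlingNorm (w : ℕ → ℝ) (p : ℝ) (a : ℕ → ℝ) : ℝ :=
  ⨆ f : {f : ℕ → ℕ // StrictMono f}, (∑' k : ℕ, |a (f.1 k)| ^ p * w k) ^ (1 / p)

open Filter Topology Finset

/-! ### Upper and lower estimates for the Garling norm -/

/-- Among the sets of a given size, an antitone function has its largest sum on an initial
segment. -/
lemma sum_le_sum_range_card {w : ℕ → ℝ} (hw : Antitone w) (s : Finset ℕ) :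
    ∑ k ∈ s, w k ≤ ∑ k ∈ range s.card, w k := by
  induction s using Finset.induction_on_max with
  | empty => simp
  | insert m s hm ih =>
    have hnot : m ∉ s := fun h => lt_irrefl _ (hm m h)
    rw [sum_insert hnot, card_insert_of_notMem hnot, sum_range_succ]
    have hcard : s.card ≤ m := by
      have : s ⊆ range m := fun x hx => mem_range.2 (hm x hx)
      simpa using card_le_card this
    linarith [hw hcard]

section
variable {w : ℕ → ℝ} {p : ℝ} {a : ℕ → ℝ} {s : Finset ℕ}

lemma garling_summable (hp : 1 ≤ p) (ha : ∀ i ∉ s, a i = 0) {f : ℕ → ℕ} (hf : StrictMono f) :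
    Summable fun k => |a (f k)| ^ p * w k := by
  apply summable_of_ne_finset_zero (s := s.preimage f hf.injective.injOn)
  intro k hk
  have : a (f k) = 0 := ha _ (by simpa using hk)
  simp [this, Real.zero_rpow (by linarith : p ≠ 0)]

lemma garling_term_le (hp : 1 ≤ p) (hw_pos : ∀ i, 0 < w i) (hw : Antitone w)
    (ha : ∀ i ∉ s, a i = 0) (ha1 : ∀ i, |a i| ≤ 1) {N : ℕ} (hN : s.card ≤ N)
    {f : ℕ → ℕ} (hf : StrictMono f) :
    (∑' k : ℕ, |a (f k)| ^ p * w k) ^ (1 / p) ≤ (∑ k ∈ range N, w k) ^ (1 / p) := by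
  have hsum : ∑' k : ℕ, |a (f k)| ^ p * w k
      = ∑ k ∈ s.preimage f hf.injective.injOn, |a (f k)| ^ p * w k := by
    apply tsum_eq_sum
    intro k hk
    have : a (f k) = 0 := ha _ (by simpa using hk)
    simp [this, Real.zero_rpow (by linarith : p ≠ 0)]
  have hcard : (s.preimage f hf.injective.injOn).card ≤ N := by
    refine le_trans ?_ hN
    apply card_le_card_of_injOn f
    · intro k hk
      simpa using hk
    · exact hf.injective.injOn
  apply Real.rpow_le_rpow
  · exact tsum_nonneg fun k =>
      mul_nonneg (Real.rpow_nonneg (abs_nonneg _) _) (hw_pos k).le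
  · rw [hsum]
    calc _ ≤ ∑ k ∈ s.preimage f hf.injective.injOn, w k := by
          apply sum_le_sum
          intro k _
          have : |a (f k)| ^ p ≤ 1 := Real.rpow_le_one (abs_nonneg _) (ha1 _) (by linarith)
          nlinarith [hw_pos k]
      _ ≤ _ := sum_le_sum_range_card hw _
      _ ≤ _ := sum_le_sum_of_subset_of_nonneg (range_mono hcard) fun k _ _ => (hw_pos k).le
  · positivity

lemma garlingNorm_le (hp : 1 ≤ p) (hw_pos : ∀ i, 0 < w i) (hw : Antitone w)
    (ha : ∀ i ∉ s, a i = 0) (ha1 : ∀ i, |a i| ≤ 1) {N : ℕ} (hN : s.card ≤ N) :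
    garlingNorm w p a ≤ (∑ k ∈ range N, w k) ^ (1 / p) := by
  have : Nonempty {f : ℕ → ℕ // StrictMono f} := ⟨⟨id, strictMono_id⟩⟩
  exact ciSup_le fun f => garling_term_le hp hw_pos hw ha ha1 hN f.2

lemma one_le_garlingNorm (hp : 1 ≤ p) (hw_pos : ∀ i, 0 < w i) (hw_one : w 0 = 1)
    (hw : Antitone w) (ha : ∀ i ∉ s, a i = 0) (ha1 : ∀ i, |a i| ≤ 1) {i : ℕ} (hi : |a i| = 1) :
    1 ≤ garlingNorm w p a := by
  have hf : StrictMono fun k : ℕ => i + k := fun _ _ h => Nat.add_lt_add_left h i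
  have hbdd : BddAbove (Set.range fun f : {f : ℕ → ℕ // StrictMono f} =>
      (∑' k : ℕ, |a (f.1 k)| ^ p * w k) ^ (1 / p)) := by
    refine ⟨(∑ k ∈ range s.card, w k) ^ (1 / p), ?_⟩
    rintro _ ⟨f, rfl⟩
    exact garling_term_le hp hw_pos hw ha ha1 le_rfl f.2
  refine le_trans ?_ (le_ciSup hbdd ⟨fun k => i + k, hf⟩)
  apply Real.one_le_rpow _ (by positivity)
  have h0 := (garling_summable (w := w) hp ha hf).le_tsum 0 fun k _ =>
    mul_nonneg (Real.rpow_nonneg (abs_nonneg _) _) (hw_pos k).le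
  simpa [hi, hw_one] using h0

end

/-! ### Gliding humps in `ℓ_p`-sums of finite-dimensional spaces -/

section
variable {q : ENNReal} {E : ℕ → Type*} [∀ n, NormedAddCommGroup (E n)]

/-- Additivity of `‖·‖ ^ q` for a vector supported in `F` and one supported off `F`. -/
lemma lp_norm_disjoint_rpow (hq : 0 < q.toReal) (x y : lp E q) (F : Finset ℕ) :
    ‖(∑ n ∈ F, lp.single q n (x n)) + (y - ∑ n ∈ F, lp.single q n (y n))‖ ^ q.toReal
      = ‖∑ n ∈ F, lp.single q n (x n)‖ ^ q.toReal
        + ‖y - ∑ n ∈ F, lp.single q n (y n)‖ ^ q.toReal := by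
  set u : lp E q :=
    (∑ n ∈ F, lp.single q n (x n)) + (y - ∑ n ∈ F, lp.single q n (y n)) with hu
  have hun : ∀ n ∈ F, u n = x n := by
    intro n hn
    have hsingle : ∀ v : lp E q, (∑ m ∈ F, lp.single q m (v m) : lp E q) n = v n := by
      intro v
      rw [lp.coeFn_sum, Finset.sum_apply]
      simp only [lp.coeFn_single, Finset.sum_pi_single, hn, if_true]
    rw [hu, lp.coeFn_add, lp.coeFn_sub, Pi.add_apply, Pi.sub_apply, hsingle, hsingle, sub_self,
      add_zero]
  have hP : ∑ n ∈ F, lp.single q n (u n) = ∑ n ∈ F, lp.single q n (x n) :=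
    sum_congr rfl fun n hn => by rw [hun n hn]
  have h1 := lp.norm_sub_norm_compl_sub_single hq u F
  rw [← lp.norm_sum_single hq, hP] at h1
  have h2 : u - ∑ n ∈ F, lp.single q n (x n) = y - ∑ n ∈ F, lp.single q n (y n) := by
    rw [hu]; abel
  rw [h2] at h1
  linarith

variable [Fact (1 ≤ q)] [∀ n, NormedSpace ℝ (E n)] [∀ n, FiniteDimensional ℝ (E n)]

/-- A bounded sequence has arbitrarily far pairs of terms that nearly agree on a given finite set
of coordinates. -/
lemma exists_pair_close {z : ℕ → lp E q} {B : ℝ} (hz : ∀ i, ‖z i‖ ≤ B)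
    (F : Finset ℕ) (M : ℕ) {ε : ℝ} (hε : 0 < ε) :
    ∃ i j, M ≤ i ∧ i < j ∧ ‖∑ n ∈ F, lp.single q n ((z j - z i) n)‖ < ε := by
  have hq0 : 0 < q := zero_lt_one.trans_le Fact.out
  let x : ℕ → (∀ n : F, E n) := fun i n => z (M + i) n
  have hx : ∀ i, x i ∈ Metric.closedBall (0 : ∀ n : F, E n) B := by
    intro i
    rw [mem_closedBall_zero_iff, pi_norm_le_iff_of_nonneg ((norm_nonneg _).trans (hz 0))]
    intro n
    exact (lp.norm_apply_le_norm hq0.ne' _ _).trans (hz _)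
  have : ∀ n : F, ProperSpace (E n) := fun n => FiniteDimensional.proper ℝ _
  obtain ⟨l, -, φ, hφ, hlim⟩ := tendsto_subseq_of_bounded Metric.isBounded_closedBall hx
  have hε' : 0 < ε / (F.card + 1) := by positivity
  obtain ⟨K, hK⟩ := Metric.cauchySeq_iff'.1 hlim.cauchySeq _ hε'
  refine ⟨M + φ K, M + φ (K + 1), by omega, by have := hφ (show K < K + 1 by omega); omega, ?_⟩
  have hd := hK (K + 1) (by omega)
  have hn : ∀ n ∈ F, ‖(z (M + φ (K + 1)) - z (M + φ K)) n‖ ≤ ε / (F.card + 1) := by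
    intro n hn
    have h1 := (dist_le_pi_dist (x (φ (K + 1))) (x (φ K)) ⟨n, hn⟩).trans hd.le
    rw [dist_eq_norm] at h1
    exact h1
  calc _ ≤ ∑ n ∈ F, ‖lp.single q n ((z (M + φ (K + 1)) - z (M + φ K)) n)‖ := norm_sum_le _ _
    _ ≤ ∑ n ∈ F, ε / (F.card + 1) := by
        apply sum_le_sum
        intro n hnF
        rw [lp.norm_single hq0]
        exact hn n hnF
    _ = F.card * (ε / (F.card + 1)) := by simp
    _ < ε := by
        rw [mul_div_assoc', div_lt_iff₀ (by positivity)]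
        nlinarith

/-- The gliding hump step: a suitable far-out difference of a bounded `δ`-separated sequence adds
at least `δ ^ q / 2` to the `q`-th power of the norm of a given vector. -/
lemma exists_add_sub_norm_rpow_ge (hq : q ≠ ⊤) {z : ℕ → lp E q} {B δ : ℝ}
    (hz : ∀ i, ‖z i‖ ≤ B) (hδ : 0 < δ) (hsep : ∀ i j, i < j → δ ≤ ‖z j - z i‖)
    (S : lp E q) (M : ℕ) :
    ∃ i j, M ≤ i ∧ i < j ∧
      ‖S‖ ^ q.toReal + δ ^ q.toReal / 2 ≤ ‖S + (z j - z i)‖ ^ q.toReal := by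
  have hq0 : 0 < q := zero_lt_one.trans_le Fact.out
  have hr : 0 < q.toReal := ENNReal.toReal_pos hq0.ne' hq
  set r := q.toReal with hrdef
  have hδr : 0 < δ ^ r := Real.rpow_pos_of_pos hδ r
  have hSr : 0 ≤ ‖S‖ ^ r := Real.rpow_nonneg (norm_nonneg _) r
  -- `g η` is the lower bound for `‖S + (z j - z i)‖` obtained when all errors are at most `η`
  let g : ℝ → ℝ := fun η => ((max 0 (‖S‖ - η)) ^ r + (max 0 (δ - η)) ^ r) ^ (1 / r) - 2 * η
  have hg : Continuous g := by
    have h1 : Continuous fun η : ℝ => (max 0 (‖S‖ - η)) ^ r :=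
      (by fun_prop : Continuous fun η : ℝ => max 0 (‖S‖ - η)).rpow_const fun _ => Or.inr hr.le
    have h2 : Continuous fun η : ℝ => (max 0 (δ - η)) ^ r :=
      (by fun_prop : Continuous fun η : ℝ => max 0 (δ - η)).rpow_const fun _ => Or.inr hr.le
    exact ((h1.add h2).rpow_const fun _ => Or.inr (by positivity)).sub
      (continuous_const.mul continuous_id)
  have hg0 : (‖S‖ ^ r + δ ^ r / 2) ^ (1 / r) < g 0 := by
    simp only [g, sub_zero, mul_zero, max_eq_right (norm_nonneg S), max_eq_right hδ.le]
    exact Real.rpow_lt_rpow (by positivity) (by linarith) (by positivity)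
  obtain ⟨η, hη, hη0⟩ : ∃ η, (‖S‖ ^ r + δ ^ r / 2) ^ (1 / r) < g η ∧ 0 < η := by
    have h1 : ∀ᶠ η in 𝓝[>] (0 : ℝ), (‖S‖ ^ r + δ ^ r / 2) ^ (1 / r) < g η :=
      (hg.tendsto 0 |>.mono_left nhdsWithin_le_nhds).eventually (lt_mem_nhds hg0)
    exact (h1.and self_mem_nhdsWithin).exists
  obtain ⟨F, hF⟩ : ∃ F : Finset ℕ, ‖(∑ n ∈ F, lp.single q n (S n)) - S‖ < η := by
    obtain ⟨F, hF⟩ := ((lp.hasSum_single hq S).eventually (Metric.ball_mem_nhds S hη0)).exists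
    exact ⟨F, by rw [← dist_eq_norm]; exact hF⟩
  obtain ⟨i, j, hMi, hij, hd⟩ := exists_pair_close hz F M hη0
  refine ⟨i, j, hMi, hij, ?_⟩
  have hsep' := hsep i j hij
  set d := z j - z i
  have hadd := lp_norm_disjoint_rpow hr S d F
  rw [← hrdef] at hadd
  set T := ∑ n ∈ F, lp.single q n (S n)
  set P := ∑ n ∈ F, lp.single q n (d n)
  have hT : max 0 (‖S‖ - η) ≤ ‖T‖ := by
    apply max_le (norm_nonneg _)
    have := norm_sub_norm_le S T
    rw [norm_sub_rev] at this
    linarith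
  have hdP : max 0 (δ - η) ≤ ‖d - P‖ := by
    apply max_le (norm_nonneg _)
    have := norm_sub_norm_le d P
    linarith
  have hTd : ‖T + (d - P)‖ ≤ ‖S + d‖ + 2 * η := by
    have : T + (d - P) = (S + d) + (T - S) - P := by abel
    rw [this]
    have h1 := norm_sub_le ((S + d) + (T - S)) P
    have h2 := norm_add_le (S + d) (T - S)
    linarith
  have hlow : g η ≤ ‖S + d‖ := by
    have : ((max 0 (‖S‖ - η)) ^ r + (max 0 (δ - η)) ^ r) ^ (1 / r) ≤ ‖T + (d - P)‖ := by
      rw [one_div, Real.rpow_inv_le_iff_of_pos (by positivity) (norm_nonneg _) hr, hadd]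
      gcongr
    simp only [g]
    linarith
  have hfin := (hη.trans_le hlow).le
  rwa [one_div, Real.rpow_inv_le_iff_of_pos (by positivity) (norm_nonneg _) hr] at hfin

/-- Iterating the gliding hump step: combinations of `2 N` terms with coefficients in
`[-1, 1]` (in fact `±1`) whose norms grow like those in `ℓ_q`. -/
lemma exists_coeffs_norm_rpow_ge (hq : q ≠ ⊤) {z : ℕ → lp E q} {B δ : ℝ}
    (hz : ∀ i, ‖z i‖ ≤ B) (hδ : 0 < δ) (hsep : ∀ i j, i < j → δ ≤ ‖z j - z i‖) (N : ℕ) :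
    ∃ (s : Finset ℕ) (a : ℕ → ℝ), (∀ i ∉ s, a i = 0) ∧ (∀ i, |a i| ≤ 1) ∧ s.card ≤ 2 * N ∧
      N * (δ ^ q.toReal / 2) ≤ ‖∑ i ∈ s, a i • z i‖ ^ q.toReal := by
  induction N with
  | zero => exact ⟨∅, 0, by simp, by simp, by simp, by simp [Real.rpow_nonneg]⟩
  | succ N ih =>
    obtain ⟨s, a, ha, ha1, hcard, hN⟩ := ih
    obtain ⟨i, j, hMi, hij, hS⟩ :=
      exists_add_sub_norm_rpow_ge hq hz hδ hsep (∑ i ∈ s, a i • z i) (s.sup id + 1)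
    have hlt : ∀ k ∈ s, k < i := fun k hk => by
      have : k ≤ s.sup id := le_sup (f := id) hk
      omega
    have hjs : j ∉ s := fun h => by have := hlt j h; omega
    have hijs : i ∉ insert j s := by
      intro h
      rcases mem_insert.1 h with h | h
      · omega
      · exact lt_irrefl _ (hlt i h)
    refine ⟨insert i (insert j s), fun k => if k = i then -1 else if k = j then 1 else a k,
      ?_, ?_, ?_, ?_⟩
    · intro k hk
      simp only [mem_insert, not_or] at hk
      simp [hk.1, hk.2.1, ha k hk.2.2]
    · intro k
      dsimp only
      split_ifs <;> simp [ha1]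
    · rw [card_insert_of_notMem hijs, card_insert_of_notMem hjs]
      omega
    · have hsum : ∑ k ∈ insert i (insert j s),
          (if k = i then (-1 : ℝ) else if k = j then 1 else a k) • z k
          = ∑ k ∈ s, a k • z k + (z j - z i) := by
        rw [sum_insert hijs, sum_insert hjs]
        have : ∑ k ∈ s, (if k = i then (-1 : ℝ) else if k = j then 1 else a k) • z k
            = ∑ k ∈ s, a k • z k := by
          apply sum_congr rfl
          intro k hk
          have h1 : k ≠ i := (hlt k hk).ne
          have h2 : k ≠ j := ((hlt k hk).trans hij).ne
          simp [h1, h2]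
        rw [this]
        simp only [if_true, hij.ne', if_false, neg_smul, one_smul]
        abel
      rw [hsum]
      push_cast
      linarith

end

/-- Let `1 ≤ p < ∞` and `w ∈ 𝒲` (a positive, nonincreasing null weight
with `w_1 = 1`, not summable; `0`-indexed below).  Let `(E_n)` be any sequence of
finite-dimensional real normed spaces and `E = (⊕_n E_n)_{ℓ_p}`.  Then there do not exist
`C ≥ 1` and a sequence `(z_i)` in `E` such that for every finitely supported real
sequence `(a_i)`:
`C⁻¹ ‖a‖_{g(w,p)} ≤ ‖∑_i a_i z_i‖_E ≤ C ‖a‖_{g(w,p)}`.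
In particular, the Garling sequence space `g(w,p)` does not embed isomorphically into any
`ℓ_p`-sum of finite-dimensional spaces. -/
theorem stmt_13 (p : ℝ) (hp : 1 ≤ p) [Fact (1 ≤ ENNReal.ofReal p)]
    (w : ℕ → ℝ) (hw_pos : ∀ i, 0 < w i) (hw_one : w 0 = 1) (hw_anti : Antitone w)
    (hw_null : Filter.Tendsto w Filter.atTop (nhds 0)) (hw_nonsum : ¬ Summable w)
    (E : ℕ → Type*) [∀ n, NormedAddCommGroup (E n)] [∀ n, NormedSpace ℝ (E n)]
    [∀ n, FiniteDimensional ℝ (E n)] :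
    ¬ ∃ (C : ℝ) (z : ℕ → lp E (ENNReal.ofReal p)), 1 ≤ C ∧
      ∀ a : ℕ → ℝ, (Function.support a).Finite →
        C⁻¹ * garlingNorm w p a ≤ ‖∑' i : ℕ, a i • z i‖ ∧
        ‖∑' i : ℕ, a i • z i‖ ≤ C * garlingNorm w p a := by
  rintro ⟨C, z, hC, h⟩
  have hp0 : 0 < p := by linarith
  have hC0 : 0 < C := by linarith
  have hr : (ENNReal.ofReal p).toReal = p := ENNReal.toReal_ofReal hp0.le
  have key : ∀ (s : Finset ℕ) (a : ℕ → ℝ), (∀ i ∉ s, a i = 0) →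
      C⁻¹ * garlingNorm w p a ≤ ‖∑ i ∈ s, a i • z i‖ ∧
        ‖∑ i ∈ s, a i • z i‖ ≤ C * garlingNorm w p a := by
    intro s a ha
    have hsupp : (Function.support a).Finite := by
      refine s.finite_toSet.subset fun i hi => ?_
      by_contra hc
      exact hi (ha i hc)
    have heq : ∑' i : ℕ, a i • z i = ∑ i ∈ s, a i • z i :=
      tsum_eq_sum fun i hi => by rw [ha i hi, zero_smul]
    rw [← heq]
    exact h a hsupp
  have hbound : ∀ i, ‖z i‖ ≤ C * (∑ k ∈ range 1, w k) ^ (1 / p) := by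
    intro i
    have ha : ∀ k ∉ ({i} : Finset ℕ), (if k = i then (1 : ℝ) else 0) = 0 := by
      intro k hk
      simpa using hk
    have h1 := (key {i} _ ha).2
    simp only [sum_singleton, if_true, one_smul] at h1
    refine h1.trans ?_
    gcongr
    refine garlingNorm_le hp hw_pos hw_anti ha ?_ (by simp)
    intro k
    split_ifs <;> simp
  have hsep : ∀ i j, i < j → C⁻¹ ≤ ‖z j - z i‖ := by
    intro i j hij
    have ha : ∀ k ∉ ({i, j} : Finset ℕ),
        (if k = i then (-1 : ℝ) else if k = j then 1 else 0) = 0 := by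
      intro k hk
      simp only [mem_insert, mem_singleton, not_or] at hk
      simp [hk.1, hk.2]
    have h1 := (key {i, j} _ ha).1
    rw [sum_pair hij.ne] at h1
    simp only [if_true, hij.ne', if_false, neg_smul, one_smul] at h1
    rw [neg_add_eq_sub] at h1
    refine le_trans ?_ h1
    refine le_mul_of_one_le_right (by positivity) ?_
    refine one_le_garlingNorm hp hw_pos hw_one hw_anti ha ?_ (i := i) (by simp)
    intro k
    split_ifs <;> simp
  set c : ℝ := C⁻¹ ^ p / 2 with hc
  have hc0 : 0 < c := by positivity
  have hCp : 0 < C ^ p := by positivity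
  have main : ∀ N : ℕ, N * c ≤ C ^ p * ∑ k ∈ range (2 * N), w k := by
    intro N
    obtain ⟨s, a, ha, ha1, hcard, hN⟩ :=
      exists_coeffs_norm_rpow_ge ENNReal.ofReal_ne_top hbound (inv_pos.2 hC0) hsep N
    rw [hr] at hN
    have hs : 0 ≤ ∑ k ∈ range (2 * N), w k := sum_nonneg fun k _ => (hw_pos k).le
    have h1 : ‖∑ i ∈ s, a i • z i‖ ≤ C * (∑ k ∈ range (2 * N), w k) ^ (1 / p) :=
      (key s a ha).2.trans
        (mul_le_mul_of_nonneg_left (garlingNorm_le hp hw_pos hw_anti ha ha1 hcard) hC0.le)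
    refine hN.trans ((Real.rpow_le_rpow (norm_nonneg _) h1 hp0.le).trans_eq ?_)
    rw [Real.mul_rpow hC0.le (Real.rpow_nonneg hs _), ← Real.rpow_mul hs,
      one_div_mul_cancel hp0.ne', Real.rpow_one]
  have hces := hw_null.cesaro
  have hpos : 0 < c / (2 * C ^ p) := by positivity
  obtain ⟨K, hK⟩ := eventually_atTop.1 (hces.eventually (gt_mem_nhds hpos))
  have h2 := hK (2 * (K + 1)) (by omega)
  have h3 := main (K + 1)
  push_cast at h2 h3
  rw [inv_mul_lt_iff₀ (by positivity)] at h2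
  have h4 := mul_lt_mul_of_pos_left h2 hCp
  have h5 : C ^ p * (2 * ((K : ℝ) + 1) * (c / (2 * C ^ p))) = (K + 1) * c := by
    field_simp
  linarith
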